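/- arXiv:2502.00727 — 2 statements merged into one kernel-verified Lean document; each statement's English description precedes it below -/
import Mathlib

section
/- Let T = (T_1, …, T_n) be a Beurling tuple on a complex Hilbert space H, let j ∈ {1, …, n}, and let P_1 ⊆ P_2 ⊆ {1, …, n} \ {j}. Then 𝒟_{j,T,P_2} ⊆ 𝒟_{j,T,P_1}, i.e., the closure of the range of D²_{j,T,P_2} is contained in the closure of the range of D²_{j,T,P_1}. -/
/-!
For self-adjoint operators, inclusion of range closures is reverse inclusion of kernels. Since
`D²_{j,T,P ∪ {k}} = D²_{j,T,P} − T_k D²_{j,T,P} T_k*`, once every truncated defect operator is known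
to be positive one has `0 ≤ D²_{j,T,P ∪ {k}} ≤ D²_{j,T,P}`, and kernels grow with `P`
(`applyDelta_ker`).

The substance is therefore positivity (`applyDelta_isPositive`). Szegő positivity and purity give a
dilation: an isometry `Φ : H → K` and doubly commuting isometries `V_i` on `K` with
`V_i* Φ = Φ T_i*` (`exists_model`, built one variable at a time on `ℓ²(ℕ, ·)`). Let `s` be the
projection onto `S = (Φ H)ᗮ`, which is invariant under all `V_i`. Then `I − T_i* T_i = L_i* L_i` with
`L_i = s V_i Φ`, so the Beurling condition `(I − T_i* T_i)(I − T_j* T_j) = 0` forces `L_i L_j* = 0`,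
that is, `s V_i (1 − s) V_j* s = 0`: the restrictions `V_i|S` doubly commute. Hence
`G = ∏_{k ∈ P} (I − Δ_{V k})(s)` is a projection (`applyDelta_projection`), and moving `V_j` through
the other isometries gives `D²_{j,T,P} = Φ* V_j* G V_j Φ ≥ 0`.
-/

open ContinuousLinearMap Filter Topology

variable {H : Type*} [NormedAddCommGroup H] [InnerProductSpace ℂ H] [CompleteSpace H]

/-- `T^k = T 0 ^ k 0 * T 1 ^ k 1 * ⋯` in increasing index order. -/
noncomputable def finPow {n : ℕ} (T : Fin n → H →L[ℂ] H) (k : Fin n → ℕ) : H →L[ℂ] H :=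
  ((List.finRange n).map fun i => T i ^ k i).prod

/-- `𝕊ₙ⁻¹(T, T*) = ∑_{k ∈ {0,1}ⁿ} (−1)^{|k|} T^k T^{*k}`. -/
noncomputable def szegoInv {n : ℕ} (T : Fin n → H →L[ℂ] H) : H →L[ℂ] H :=
  ∑ k : Fin n → Bool,
    ((-1 : ℂ) ^ (∑ i, if k i then 1 else 0)) •
      (finPow T (fun i => if k i then 1 else 0) *
        adjoint (finPow T (fun i => if k i then 1 else 0)))

/-- A Szegő tuple: commuting contractions, `𝕊ₙ⁻¹(T,T*) ≥ 0`, each `Tᵢ` of class `C_{·0}`. -/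
structure IsSzegoTuple {n : ℕ} (T : Fin n → H →L[ℂ] H) : Prop where
  comm : ∀ i j, T i * T j = T j * T i
  contraction : ∀ i, ‖T i‖ ≤ 1
  pos : (szegoInv T).IsPositive
  pure : ∀ i (h : H), Tendsto (fun m : ℕ => (adjoint (T i) ^ m) h) atTop (𝓝 0)

/-- A Beurling tuple: a Szegő tuple with `(I − Tᵢ*Tᵢ)(I − Tⱼ*Tⱼ) = 0` for `i ≠ j`. -/
def IsBeurlingTuple {n : ℕ} (T : Fin n → H →L[ℂ] H) : Prop :=
  IsSzegoTuple T ∧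
    ∀ i j, i ≠ j → (1 - adjoint (T i) * T i) * (1 - adjoint (T j) * T j) = 0

/-- Apply `∏_{k ∈ L} (I − Δ_{T k})` to `A`, where `Δ_X(A) = X A X*`. -/
noncomputable def applyDelta {n : ℕ} (T : Fin n → H →L[ℂ] H) (L : List (Fin n))
    (A : H →L[ℂ] H) : H →L[ℂ] H :=
  L.foldr (fun k B => B - T k * B * adjoint (T k)) A

/-- The truncated defect operator `D²_{j,T,P} = (∏_{k ∈ P} (I − Δ_{T k}))(I − Tⱼ*Tⱼ)`. -/
noncomputable def truncDefectSq {n : ℕ} (T : Fin n → H →L[ℂ] H) (j : Fin n)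
    (P : Finset (Fin n)) : H →L[ℂ] H :=
  applyDelta T (P.sort (· ≤ ·)) (1 - adjoint (T j) * T j)

/-- `D²_{j,T} = D²_{j,T,P}` for `P = {1,…,n} \ {j}`. -/
noncomputable def jointDefectSq {n : ℕ} (T : Fin n → H →L[ℂ] H) (j : Fin n) : H →L[ℂ] H :=
  truncDefectSq T j (Finset.univ.erase j)

/-- The `(i,j)`-th joint commutator `δᵢⱼ(T) = (∏_{k ∉ {i,j}} (I − Δ_{T k}))([Tⱼ, Tᵢ*])`. -/
noncomputable def jointComm {n : ℕ} (T : Fin n → H →L[ℂ] H) (i j : Fin n) : H →L[ℂ] H :=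
  applyDelta T (((Finset.univ.erase i).erase j).sort (· ≤ ·))
    (T j * adjoint (T i) - adjoint (T i) * T j)

/-- Extend a multi-index supported on `P` by zero: gives `T_P^α` via `finPow`. -/
def extendSupport {n : ℕ} (P : Finset (Fin n)) (α : ↥P → ℕ) : Fin n → ℕ :=
  fun i => if h : i ∈ P then α ⟨i, h⟩ else 0

/-! ### The maps `∏ (I − Δ)` -/

theorem applyDelta_cons {n : ℕ} (T : Fin n → H →L[ℂ] H) (k : Fin n) (L : List (Fin n))
    (A : H →L[ℂ] H) :
    applyDelta T (k :: L) A = applyDelta T L A - T k * applyDelta T L A * adjoint (T k) := rfl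

theorem applyDelta_append {n : ℕ} (T : Fin n → H →L[ℂ] H) (L M : List (Fin n))
    (A : H →L[ℂ] H) :
    applyDelta T (L ++ M) A = applyDelta T L (applyDelta T M A) := by
  simp [applyDelta]

theorem applyDelta_perm {n : ℕ} {T : Fin n → H →L[ℂ] H}
    (hc : ∀ i j, T i * T j = T j * T i) {L M : List (Fin n)} (h : L.Perm M) (A : H →L[ℂ] H) :
    applyDelta T L A = applyDelta T M A := by
  unfold applyDelta
  refine h.foldr_eq' (fun x _ y _ B => ?_) _
  have h' : adjoint (T x) * adjoint (T y) = adjoint (T y) * adjoint (T x) := by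
    simp only [← star_eq_adjoint, ← star_mul, hc]
  have e1 : T x * (T y * B * adjoint (T y)) * adjoint (T x)
      = T y * (T x * B * adjoint (T x)) * adjoint (T y) := by
    calc _ = (T x * T y) * B * (adjoint (T y) * adjoint (T x)) := by noncomm_ring
      _ = (T y * T x) * B * (adjoint (T x) * adjoint (T y)) := by rw [hc, h']
      _ = _ := by noncomm_ring
  simp only [mul_sub, sub_mul, e1]
  abel

/-- The Szegő operator is `∏_k (I − Δ_{T k})` applied to the identity. -/
theorem szegoInv_eq_applyDelta {n : ℕ} (T : Fin n → H →L[ℂ] H) :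
    szegoInv T = applyDelta T (List.finRange n) 1 := by
  induction n with
  | zero => simp [szegoInv, applyDelta, finPow, ← star_eq_adjoint]
  | succ n ih =>
    have hd : applyDelta T ((List.finRange n).map Fin.succ) 1 = szegoInv (fun i => T i.succ) := by
      rw [ih]; simp [applyDelta, List.foldr_map]
    rw [List.finRange_succ, applyDelta_cons, hd]
    unfold szegoInv
    rw [← (Fin.consEquiv fun _ => Bool).sum_comp, Fintype.sum_prod_type]
    simp only [Fintype.sum_bool, Fin.consEquiv_apply, finPow, List.finRange_succ, List.map_cons,
      List.prod_cons, List.map_map, Function.comp_def, Fin.cons_zero, Fin.cons_succ,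
      Fin.sum_univ_succ, if_true, pow_add, pow_one, pow_zero, Bool.false_eq_true, if_false, one_mul]
    rw [add_comm, sub_eq_add_neg]
    congr 1
    rw [Finset.mul_sum, Finset.sum_mul, ← Finset.sum_neg_distrib]
    refine Finset.sum_congr rfl fun k _ => ?_
    simp only [← star_eq_adjoint, star_mul, neg_mul, one_mul, neg_smul, mul_smul_comm,
      smul_mul_assoc, mul_assoc]

/-! ### Operators on `ℓ²(ℕ, K)` -/

theorem summable_sq {K : Type*} [NormedAddCommGroup K] (f : lp (fun _ : ℕ => K) 2) :
    Summable fun m => ‖f m‖ ^ 2 := by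
  simpa using (memℓp_gen_iff (p := 2) (by simp)).1 (lp.memℓp f)

theorem norm_sq_eq {K : Type*} [NormedAddCommGroup K] (f : lp (fun _ : ℕ => K) 2) :
    ‖f‖ ^ 2 = ∑' m, ‖f m‖ ^ 2 := by
  simpa using lp.norm_rpow_eq_tsum (p := 2) (by simp) f

section Model

variable {E K : Type*} [NormedAddCommGroup E] [InnerProductSpace ℂ E]
  [NormedAddCommGroup K] [InnerProductSpace ℂ K]

/-- The operator `x ↦ (L₀ x, L₁ x, …)` into `ℓ²(ℕ, K)`, for a sequence of operators `Lₘ` with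
`∑ ‖Lₘ x‖² ≤ C² ‖x‖²`. -/
noncomputable def column (L : ℕ → E →L[ℂ] K) (C : ℝ) (hC : 0 ≤ C)
    (hL : ∀ x, Summable fun m => ‖L m x‖ ^ 2)
    (hb : ∀ x, ∑' m, ‖L m x‖ ^ 2 ≤ (C * ‖x‖) ^ 2) : E →L[ℂ] lp (fun _ : ℕ => K) 2 :=
  LinearMap.mkContinuous
    { toFun := fun x => ⟨fun m => L m x,
        (memℓp_gen_iff (by simp)).2 (by simpa using hL x)⟩
      map_add' := fun x y => by
        ext m; exact map_add (L m) x y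
      map_smul' := fun c x => by
        ext m; exact map_smul (L m) c x } C fun x => by
    rw [← sq_le_sq₀ (norm_nonneg _) (by positivity), norm_sq_eq]
    exact hb x

@[simp] theorem column_apply (L : ℕ → E →L[ℂ] K) (C : ℝ) (hC : 0 ≤ C)
    (hL : ∀ x, Summable fun m => ‖L m x‖ ^ 2)
    (hb : ∀ x, ∑' m, ‖L m x‖ ^ 2 ≤ (C * ‖x‖) ^ 2) (x : E) (m : ℕ) :
    column L C hC hL hb x m = L m x := rfl

/-- The operator `I ⊗ a` on `ℓ²(ℕ, K) = ℓ²(ℕ) ⊗ K`. -/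
noncomputable def ampl (a : K →L[ℂ] K) :
    lp (fun _ : ℕ => K) 2 →L[ℂ] lp (fun _ : ℕ => K) 2 :=
  lp.mapCLM 2 (fun _ => a) (norm_nonneg a) fun _ => le_rfl

@[simp] theorem ampl_apply (a : K →L[ℂ] K) (f : lp (fun _ : ℕ => K) 2) (m : ℕ) :
    ampl a f m = a (f m) := rfl

theorem adjoint_ampl [CompleteSpace K] (a : K →L[ℂ] K) :
    adjoint (ampl a) = ampl (adjoint a) := by
  symm
  rw [eq_adjoint_iff]
  intro f g
  simp [lp.inner_eq_tsum, adjoint_inner_left]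

/-- The backward shift on `ℓ²(ℕ, K)`. -/
noncomputable def backShift (K : Type*) [NormedAddCommGroup K] [InnerProductSpace ℂ K] :
    lp (fun _ : ℕ => K) 2 →L[ℂ] lp (fun _ : ℕ => K) 2 :=
  column (fun m => lp.evalCLM ℂ (fun _ : ℕ => K) (p := 2) (m + 1)) 1 zero_le_one
    (fun f => (summable_nat_add_iff 1).2 (summable_sq f)) fun f => by
      rw [one_mul, norm_sq_eq, (summable_sq f).tsum_eq_zero_add]
      exact le_add_of_nonneg_left (sq_nonneg _)

@[simp] theorem backShift_apply (f : lp (fun _ : ℕ => K) 2) (m : ℕ) :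
    backShift K f m = f (m + 1) := rfl

theorem adjoint_backShift_apply [CompleteSpace K] (f : lp (fun _ : ℕ => K) 2) :
    adjoint (backShift K) f 0 = 0 ∧ ∀ m, adjoint (backShift K) f (m + 1) = f m := by
  classical
  constructor
  · refine ext_inner_left ℂ fun x : K => ?_
    rw [← lp.inner_single_left (G := fun _ : ℕ => K) (𝕜 := ℂ) 0 x, adjoint_inner_right, inner_zero_right,
      lp.inner_eq_tsum]
    simp [lp.single_apply]
  · intro m
    refine ext_inner_left ℂ fun x : K => ?_
    rw [← lp.inner_single_left (G := fun _ : ℕ => K) (𝕜 := ℂ) (m + 1) x, adjoint_inner_right]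
    have : backShift K (lp.single 2 (m + 1) x) = lp.single 2 m x := by
      ext k; simp [lp.single_apply, Pi.single_apply]
    rw [this, lp.inner_single_left]

end Model

/-! ### The dilation -/

universe u

/-- If `∏_{k ∈ L} (I − Δ_{T k})(X) ≥ 0` and the `T k` are pure, then `X = Φ*Φ` for an operator
`Φ : H → K` such that `Φ T_k* = V_k* Φ` (`k ∈ L`) with doubly commuting isometries `V_k` on `K`.
Passing from `L` to `k :: L` replaces `K` by `ℓ²(ℕ, K)`, `Φ` by `h ↦ (Φ T_k*ᵐ h)ₘ` and `V_i` by
`I ⊗ V_i`; the new isometry `V_k` is the shift. Purity of `T_k` makes the sum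
`∑ T_kᵐ (X − T_k X T_k*) T_k*ᵐ` telescope to `X`. -/
theorem exists_model {H : Type u} [NormedAddCommGroup H] [InnerProductSpace ℂ H]
    [CompleteSpace H] {n : ℕ} {T : Fin n → H →L[ℂ] H} (hc : ∀ i j, T i * T j = T j * T i)
    (hp : ∀ i (h : H), Tendsto (fun m : ℕ => (adjoint (T i) ^ m) h) atTop (𝓝 0))
    (L : List (Fin n)) : L.Nodup → ∀ X : H →L[ℂ] H, (applyDelta T L X).IsPositive →
    ∃ (K : Type u) (_ : NormedAddCommGroup K) (_ : InnerProductSpace ℂ K) (_ : CompleteSpace K)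
      (Φ : H →L[ℂ] K) (V : Fin n → K →L[ℂ] K),
      (adjoint Φ ∘L Φ = X) ∧ (∀ i ∈ L, adjoint (V i) * V i = 1) ∧
      (∀ i ∈ L, ∀ j ∈ L, V i * V j = V j * V i) ∧
      (∀ i ∈ L, ∀ j ∈ L, i ≠ j → adjoint (V i) * V j = V j * adjoint (V i)) ∧
      (∀ i ∈ L, ∀ h, adjoint (V i) (Φ h) = Φ (adjoint (T i) h)) := by
  induction L with
  | nil =>
    intro _ X hX
    have hX' : 0 ≤ X := (nonneg_iff_isPositive X).2 hX
    refine ⟨H, _, _, ‹_›, CFC.sqrt X, 0, ?_, by simp, by simp, by simp, by simp⟩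
    have h1 : adjoint (CFC.sqrt X) = CFC.sqrt X :=
      (IsSelfAdjoint.of_nonneg (CFC.sqrt_nonneg X))
    rw [h1]
    exact CFC.sqrt_mul_sqrt_self X hX'
  | cons k L ih =>
    intro hnd X hX
    have hk : k ∉ L := (List.nodup_cons.1 hnd).1
    have hperm : applyDelta T (k :: L) X = applyDelta T L (X - T k * X * adjoint (T k)) := by
      rw [applyDelta_perm hc (List.perm_append_singleton k L).symm, applyDelta_append]
      rfl
    obtain ⟨K, _, _, _, Φ, V, hΦ, hiso, hcom, hdc, hint⟩ :=
      ih (List.nodup_cons.1 hnd).2 _ (hperm ▸ hX)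
    have hcadj : ∀ i (m : ℕ) h,
        (adjoint (T k) ^ m) (adjoint (T i) h) = adjoint (T i) ((adjoint (T k) ^ m) h) := by
      intro i m h
      have : Commute (adjoint (T k)) (adjoint (T i)) := by
        change _ * _ = _ * _
        simp only [← star_eq_adjoint, ← star_mul, hc]
      exact congrArg (· h) (this.pow_left m).eq
    -- one step of the telescoping sum
    have hstep : ∀ h, ((‖Φ h‖ ^ 2 : ℝ) : ℂ)
        = inner ℂ h (X h) - inner ℂ (adjoint (T k) h) (X (adjoint (T k) h)) := by
      intro h
      have h1 : inner ℂ h ((adjoint Φ ∘L Φ) h) = ((‖Φ h‖ ^ 2 : ℝ) : ℂ) := by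
        rw [comp_apply, adjoint_inner_right, inner_self_eq_norm_sq_to_K]
        norm_cast
      rw [← h1, hΦ]
      simp [adjoint_inner_left]
    have hsum : ∀ h (m : ℕ), ((∑ l ∈ Finset.range m, ‖Φ ((adjoint (T k) ^ l) h)‖ ^ 2 : ℝ) : ℂ)
        = inner ℂ h (X h)
          - inner ℂ ((adjoint (T k) ^ m) h) (X ((adjoint (T k) ^ m) h)) := by
      intro h m
      induction m with
      | zero => simp
      | succ m ihm =>
        rw [Finset.sum_range_succ, Complex.ofReal_add, ihm, hstep, pow_succ']
        simp
    have hlim : ∀ h, Tendsto (fun m : ℕ =>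
        ((∑ l ∈ Finset.range m, ‖Φ ((adjoint (T k) ^ l) h)‖ ^ 2 : ℝ) : ℂ)) atTop
        (𝓝 (inner ℂ h (X h))) := by
      intro h
      simp only [hsum]
      have h2 := (hp k h).inner (𝕜 := ℂ) ((X.continuous.tendsto 0).comp (hp k h))
      simpa using tendsto_const_nhds.sub h2
    have hhas : ∀ h, HasSum (fun l : ℕ => ‖Φ ((adjoint (T k) ^ l) h)‖ ^ 2)
        (inner ℂ h (X h) : ℂ).re := by
      intro h
      rw [hasSum_iff_tendsto_nat_of_nonneg fun _ => sq_nonneg _]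
      exact (Complex.continuous_re.tendsto _).comp (hlim h)
    let Ψ : H →L[ℂ] lp (fun _ : ℕ => K) 2 :=
      column (fun m => Φ ∘L (adjoint (T k) ^ m)) (‖X‖ + 1) (by positivity)
        (fun h => (hhas h).summable) fun h => by
          refine ((hhas h).tsum_eq).le.trans ?_
          refine (Complex.re_le_norm _).trans ((norm_inner_le_norm _ _).trans ?_)
          calc ‖h‖ * ‖X h‖ ≤ ‖h‖ * (‖X‖ * ‖h‖) := by gcongr; exact X.le_opNorm h
            _ ≤ _ := by nlinarith [norm_nonneg X, sq_nonneg ‖h‖,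
                mul_nonneg (norm_nonneg X) (sq_nonneg ‖h‖),
                mul_nonneg (sq_nonneg ‖X‖) (sq_nonneg ‖h‖)]
    have hΨ : ∀ h m, Ψ h m = Φ ((adjoint (T k) ^ m) h) := fun h m => rfl
    let W : Fin n → lp (fun _ : ℕ => K) 2 →L[ℂ] lp (fun _ : ℕ => K) 2 :=
      fun i => if i = k then adjoint (backShift K) else ampl (V i)
    have hWk : W k = adjoint (backShift K) := if_pos rfl
    have hW : ∀ i ∈ L, W i = ampl (V i) := fun i hi =>
      if_neg (ne_of_mem_of_not_mem hi hk)
    have hBA : ∀ a : K →L[ℂ] K, backShift K * ampl a = ampl a * backShift K := by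
      intro a; ext f m; rfl
    have hAB : ∀ a : K →L[ℂ] K,
        adjoint (backShift K) * ampl a = ampl a * adjoint (backShift K) := by
      intro a
      have h := congrArg star (hBA (adjoint a))
      simpa only [star_mul, star_eq_adjoint, adjoint_ampl, adjoint_adjoint] using h.symm
    have hampl : ∀ a b : K →L[ℂ] K, ampl a * ampl b = ampl (a * b) := fun _ _ => rfl
    refine ⟨lp (fun _ : ℕ => K) 2, inferInstance, inferInstance, inferInstance, Ψ, W,
      ?_, ?_, ?_, ?_, ?_⟩
    · rw [← ContinuousLinearMap.coe_inj, ← ext_inner_map]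
      intro h
      rw [← inner_conj_symm, ← inner_conj_symm ((X : H →ₗ[ℂ] H) h)]
      refine congrArg _ ?_
      have h1 : inner ℂ h ((adjoint Ψ ∘L Ψ) h) = ((‖Ψ h‖ ^ 2 : ℝ) : ℂ) := by
        rw [comp_apply, adjoint_inner_right, inner_self_eq_norm_sq_to_K]
        norm_cast
      refine h1.trans (tendsto_nhds_unique ?_ (hlim h))
      rw [norm_sq_eq]
      exact (Complex.continuous_ofReal.tendsto _).comp
        ((hhas h).summable.hasSum.tendsto_sum_nat)
    · intro i hi
      rcases List.mem_cons.1 hi with rfl | hi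
      · rw [hWk, adjoint_adjoint]
        ext f m
        exact (adjoint_backShift_apply f).2 m
      · rw [hW i hi, adjoint_ampl, hampl, hiso i hi]
        rfl
    · intro i hi j hj
      obtain rfl | hi' := List.mem_cons.1 hi <;> obtain rfl | hj' := List.mem_cons.1 hj
      · rfl
      · rw [hWk, hW j hj', hAB]
      · rw [hWk, hW i hi', hAB]
      · rw [hW i hi', hW j hj', hampl, hampl, hcom i hi' j hj']
    · intro i hi j hj hij
      obtain rfl | hi' := List.mem_cons.1 hi <;> obtain rfl | hj' := List.mem_cons.1 hj
      · exact absurd rfl hij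
      · rw [hWk, hW j hj', adjoint_adjoint, hBA]
      · rw [hWk, hW i hi', adjoint_ampl, hAB]
      · rw [hW i hi', hW j hj', adjoint_ampl, hampl, hampl, hdc i hi' j hj' hij]
    · intro i hi h
      rcases List.mem_cons.1 hi with rfl | hi
      · rw [hWk, adjoint_adjoint]
        ext m
        simp [hΨ, pow_succ]
      · rw [hW i hi, adjoint_ampl]
        ext m
        simp [hΨ, hcadj, hint i hi]

/-! ### Positivity of the truncated defect operators -/

/-- Let `V` be doubly commuting isometries and `s` a projection onto a subspace `S` invariant under
all `V i` on which the restrictions `V i|S` are again doubly commuting (`hcross`). Then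
`∏_{k ∈ L} (I − Δ_{V k})(s)` is a projection: it equals `s ∏_{k ∈ L} (1 − V_k s V_k*)`, a product of
commuting projections. The third conclusion, a form of this commutation, carries the induction. -/
theorem applyDelta_projection {K : Type*} [NormedAddCommGroup K] [InnerProductSpace ℂ K]
    [CompleteSpace K] {n : ℕ} {V : Fin n → K →L[ℂ] K} {s : K →L[ℂ] K}
    (hiso : ∀ i, star (V i) * V i = 1) (hcom : ∀ i j, V i * V j = V j * V i)
    (hs : star s = s) (hss : s * s = s) (hinv : ∀ i, s * V i * s = V i * s)
    (hcross : ∀ i j, i ≠ j → s * V i * star (V j) * s = V i * s * star (V j))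
    (hdc : ∀ i j, i ≠ j → star (V i) * V j = V j * star (V i))
    (L : List (Fin n)) : L.Nodup →
    star (applyDelta V L s) = applyDelta V L s ∧
    applyDelta V L s * applyDelta V L s = applyDelta V L s ∧
    ∀ k, k ∉ L → V k * applyDelta V L s * star (V k)
      = V k * s * star (V k) * applyDelta V L s := by
  have hcom' : ∀ i j, star (V i) * star (V j) = star (V j) * star (V i) := fun i j => by
    rw [← star_mul, hcom, star_mul]
  have hinv' : ∀ i, s * star (V i) * s = s * star (V i) := fun i => by
    simpa only [star_mul, hs, mul_assoc] using congrArg star (hinv i)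
  -- the projections `V i s V i*` onto the ranges of the restricted isometries
  have hpp : ∀ i, V i * s * star (V i) * (V i * s * star (V i)) = V i * s * star (V i) :=
    fun i => by
      calc _ = V i * s * (star (V i) * V i) * s * star (V i) := by noncomm_ring
        _ = V i * (s * s) * star (V i) := by rw [hiso]; noncomm_ring
        _ = _ := by rw [hss]
  have hpq : ∀ i j, i ≠ j → V i * s * star (V i) * (V j * s * star (V j))
      = V j * (V i * s * star (V i)) * star (V j) := fun i j hij => by
    calc _ = V i * s * (star (V i) * V j) * s * star (V j) := by noncomm_ring
      _ = V i * (s * V j * star (V i) * s) * star (V j) := by rw [hdc i j hij]; noncomm_ring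
      _ = (V i * V j) * s * (star (V i) * star (V j)) := by
        rw [hcross j i hij.symm]; noncomm_ring
      _ = (V j * V i) * s * (star (V i) * star (V j)) := by rw [hcom]
      _ = _ := by noncomm_ring
  induction L with
  | nil =>
    intro _
    refine ⟨hs, hss, fun k _ => ?_⟩
    change V k * s * star (V k) = V k * s * star (V k) * s
    rw [mul_assoc, mul_assoc, mul_assoc, ← mul_assoc s, hinv']
  | cons k L ih =>
    intro hnd
    obtain ⟨hk, hL⟩ := List.nodup_cons.1 hnd
    obtain ⟨h1, h2, h3⟩ := ih hL
    rw [applyDelta_cons, ← star_eq_adjoint]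
    set G := applyDelta V L s
    have h1' : star (V k * G * star (V k)) = V k * G * star (V k) := by
      simp only [star_mul, star_star, h1, mul_assoc]
    have h4 : G * (V k * G * star (V k)) = V k * G * star (V k) := by
      have h5 : V k * G * star (V k) = G * (V k * s * star (V k)) := by
        rw [← h1', h3 k hk]
        simp only [star_mul, star_star, h1, hs, mul_assoc]
      rw [h5, ← mul_assoc, h2]
    have h4' : (V k * G * star (V k)) * G = V k * G * star (V k) := by
      simpa only [star_mul G, h1', h1] using congrArg star h4
    have h6 : (V k * G * star (V k)) * (V k * G * star (V k)) = V k * G * star (V k) := by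
      calc _ = V k * G * (star (V k) * V k) * G * star (V k) := by noncomm_ring
        _ = V k * (G * G) * star (V k) := by rw [hiso]; noncomm_ring
        _ = _ := by rw [h2]
    refine ⟨by rw [star_sub, h1, h1'], ?_, ?_⟩
    · rw [sub_mul, mul_sub, mul_sub, h2, h4, h4', h6]
      abel
    · intro l hl
      have hlk : l ≠ k := fun h => hl (h ▸ List.mem_cons_self)
      have hlL : l ∉ L := fun h => hl (List.mem_cons_of_mem _ h)
      rw [mul_sub, sub_mul, mul_sub, h3 l hlL]
      congr 1
      calc V l * (V k * G * star (V k)) * star (V l)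
          = (V l * V k) * G * (star (V k) * star (V l)) := by noncomm_ring
        _ = V k * (V l * G * star (V l)) * star (V k) := by
          rw [hcom l k, hcom' k l]; noncomm_ring
        _ = V k * (V l * s * star (V l)) * 1 * G * star (V k) := by
          rw [h3 l hlL]; noncomm_ring
        _ = (V k * (V l * s * star (V l)) * star (V k)) * (V k * G * star (V k)) := by
          rw [← hiso k]; noncomm_ring
        _ = _ := by
          rw [← hpq l k hlk, h3 k hk]
          calc _ = V l * s * star (V l) *
                ((V k * s * star (V k)) * (V k * s * star (V k))) * G := by noncomm_ring
            _ = _ := by rw [hpp]; noncomm_ring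

/-- The truncated defect operators of a Beurling tuple are positive. In the model of
`exists_model` with `X = 1`, let `s` be the projection onto the complement of `Φ H`. The Beurling
condition says that `V_i|S` doubly commute on the range `S` of `s`, and
`D²_{j,T,L} = Φ* V_j* G V_j Φ` with `G = ∏_{k ∈ L} (I − Δ_{V k})(s)`, a projection. -/
theorem applyDelta_isPositive {H : Type u} [NormedAddCommGroup H] [InnerProductSpace ℂ H]
    [CompleteSpace H] {n : ℕ} {T : Fin n → H →L[ℂ] H} (hT : IsBeurlingTuple T) (j : Fin n)
    (L : List (Fin n)) (hL : L.Nodup) (hj : j ∉ L) :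
    (applyDelta T L (1 - adjoint (T j) * T j)).IsPositive := by
  obtain ⟨hS, hB⟩ := hT
  obtain ⟨K, _, _, _, Φ, V, hΦ, hiso, hcom, hdc, hint⟩ :=
    exists_model hS.comm hS.pure (List.finRange n) (List.nodup_finRange n) 1
      (szegoInv_eq_applyDelta T ▸ hS.pos)
  simp only [List.mem_finRange, forall_true_left] at hiso hcom hdc hint
  simp only [← star_eq_adjoint] at hiso hdc
  have hΦ' : ∀ h, adjoint Φ (Φ h) = h := fun h => congrArg (· h) hΦ
  have hint' : ∀ i y, adjoint Φ (V i y) = T i (adjoint Φ y) := fun i y => by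
    refine ext_inner_left ℂ fun x => ?_
    rw [adjoint_inner_right, ← adjoint_inner_left, hint, ← adjoint_inner_right,
      adjoint_inner_left]
  set P : K →L[ℂ] K := Φ ∘L adjoint Φ with hP
  have hPs : star P = P := by rw [star_eq_adjoint, hP, adjoint_comp, adjoint_adjoint]
  have hPP : P * P = P := by ext x; simp [hP, hΦ']
  have hPV : ∀ i, P * V i * P = P * V i := fun i => by
    ext x; simp [hP, hΦ', hint']
  set s : K →L[ℂ] K := 1 - P with hs
  have hss : star s = s := by rw [hs, star_sub, star_one, hPs]
  have hsq : s * s = s := by rw [hs, mul_sub, sub_mul, sub_mul, hPP]; simp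
  have hinv : ∀ i, s * V i * s = V i * s := fun i => by
    have : P * V i * s = 0 := by rw [hs, mul_sub, hPV]; simp
    calc s * V i * s = V i * s - P * V i * s := by rw [hs]; noncomm_ring
      _ = _ := by rw [this, sub_zero]
  -- the defect operator of `T i`, transported to `K`
  have hD : ∀ i, star (s * V i * P) * (s * V i * P)
      = Φ ∘L (1 - adjoint (T i) * T i) ∘L adjoint Φ := fun i => by
    have e : star (s * V i * P) * (s * V i * P) = P * star (V i) * s * V i * P := by
      simp only [star_mul, hss, hPs]
      calc _ = P * star (V i) * (s * s) * V i * P := by noncomm_ring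
        _ = _ := by rw [hsq]
    have e2 : P * star (V i) * s * V i * P = P * P - P * star (V i) * P * V i * P := by
      calc _ = P * (star (V i) * V i) * P - P * star (V i) * P * V i * P := by
            rw [hs]; noncomm_ring
        _ = _ := by rw [hiso, mul_one]
    rw [e, e2, hPP]
    ext x
    simp [hP, star_eq_adjoint, hint, hint', hΦ']
  -- `D_i D_j = 0` reads `Y_i* Y_i Y_j* Y_j = 0` for `Y_i = s V_i P`, hence `Y_i Y_j* = 0`
  have hY : ∀ i j, i ≠ j → (s * V i * P) * star (s * V j * P) = 0 := fun i j hij => by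
    have h0 : star (s * V i * P) * (s * V i * P) *
        (star (s * V j * P) * (s * V j * P)) = 0 := by
      rw [hD, hD]
      ext x
      have := congrArg (fun A => Φ (A (adjoint Φ x))) (hB i j hij)
      simpa [hΦ'] using this
    have h1 : ∀ A B : K →L[ℂ] K, star A * A * B = 0 → A * B = 0 := fun A B h => by
      rw [← CStarRing.star_mul_self_eq_zero_iff, star_mul]
      calc _ = star B * (star A * A * B) := by noncomm_ring
        _ = 0 := by rw [h, mul_zero]
    have h2 := h1 _ _ h0
    have h3 := congrArg star h2
    rw [star_zero, star_mul, star_mul, star_star] at h3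
    have h4 := congrArg star (h1 _ _ h3)
    simpa only [star_zero, star_mul, star_star] using h4
  have hcross : ∀ i j, i ≠ j → s * V i * star (V j) * s = V i * s * star (V j) :=
    fun i j hij => by
    have h1 : s * V i * P * star (V j) * s = 0 := by
      have := hY i j hij
      simp only [star_mul, hss, hPs] at this
      calc _ = s * V i * (P * P) * star (V j) * s := by rw [hPP]
        _ = s * V i * P * (P * (star (V j) * s)) := by noncomm_ring
        _ = 0 := this
    have h2 : s * star (V j) * s = s * star (V j) := by
      simpa only [star_mul, hss, mul_assoc] using congrArg star (hinv j)
    calc s * V i * star (V j) * s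
        = s * V i * P * star (V j) * s + s * V i * s * star (V j) * s := by
          rw [hs]; noncomm_ring
      _ = V i * (s * star (V j) * s) := by rw [h1, hinv]; noncomm_ring
      _ = _ := by rw [h2]; noncomm_ring
  obtain ⟨hG1, hG2, -⟩ := applyDelta_projection hiso hcom hss hsq hinv hcross
    (fun i j h => hdc i j h) L hL
  -- compressing to `H` intertwines the two families of maps `I − Δ`
  have hcomp : ∀ (M : List (Fin n)) (Z : K →L[ℂ] K),
      adjoint Φ ∘L applyDelta V M Z ∘L Φ = applyDelta T M (adjoint Φ ∘L Z ∘L Φ) := by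
    intro M Z
    induction M with
    | nil => rfl
    | cons k M ih =>
      rw [applyDelta_cons, applyDelta_cons, ← ih]
      ext x
      simp [hint, hint']
  have hconj : ∀ M : List (Fin n), j ∉ M →
      star (V j) * applyDelta V M s * V j = applyDelta V M (star (V j) * s * V j) := by
    intro M hM
    induction M with
    | nil => rfl
    | cons k M ih =>
      have hjk : j ≠ k := fun h => hM (h ▸ List.mem_cons_self)
      rw [applyDelta_cons, applyDelta_cons, ← ih fun h => hM (List.mem_cons_of_mem _ h),
        ← star_eq_adjoint, mul_sub, sub_mul]
      congr 1
      calc _ = (star (V j) * V k) * applyDelta V M s * (star (V k) * V j) := by noncomm_ring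
        _ = _ := by rw [hdc j k hjk, hdc k j hjk.symm]; noncomm_ring
  have hfin : applyDelta T L (1 - adjoint (T j) * T j)
      = adjoint (applyDelta V L s ∘L V j ∘L Φ) ∘L (applyDelta V L s ∘L V j ∘L Φ) := by
    have h1 : (1 - adjoint (T j) * T j) = adjoint Φ ∘L (star (V j) * s * V j) ∘L Φ := by
      have : star (V j) * s * V j = 1 - star (V j) * P * V j := by
        calc _ = star (V j) * V j - star (V j) * P * V j := by rw [hs]; noncomm_ring
          _ = _ := by rw [hiso]
      rw [this]
      ext x
      simp [hP, star_eq_adjoint, hint, hint', hΦ']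
    rw [h1, ← hcomp, ← hconj L hj, adjoint_comp, adjoint_comp, ← star_eq_adjoint
      (applyDelta V L s), hG1]
    nth_rw 1 [← hG2]
    rfl
  rw [hfin]
  exact isPositive_adjoint_comp_self _

/-! ### Kernels and ranges of the truncated defect operators -/

theorem apply_eq_zero_of_isPositive {H : Type u} [NormedAddCommGroup H] [InnerProductSpace ℂ H]
    [CompleteSpace H] {A : H →L[ℂ] H} (hA : A.IsPositive) {x : H}
    (hx : RCLike.re (inner ℂ (A x) x) = 0) : A x = 0 := by
  have hA' : 0 ≤ A := (nonneg_iff_isPositive A).2 hA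
  have h1 : adjoint (CFC.sqrt A) = CFC.sqrt A :=
    IsSelfAdjoint.of_nonneg (CFC.sqrt_nonneg A)
  have h2 : ∀ y, CFC.sqrt A (CFC.sqrt A y) = A y := fun y =>
    congrArg (· y) (CFC.sqrt_mul_sqrt_self A hA')
  rw [← h2, ← h1, adjoint_inner_left, h1, inner_self_eq_norm_sq] at hx
  rw [← h2, norm_eq_zero.1 (pow_eq_zero_iff two_ne_zero |>.1 hx), map_zero]

/-- Larger index sets give larger kernels: `D²_{P ∪ {k}} = D²_P − T_k D²_P T_k*` and all truncated
defect operators are positive, so `0 ≤ ⟨D²_{P ∪ {k}} x, x⟩ ≤ ⟨D²_P x, x⟩`. -/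
theorem applyDelta_ker {H : Type u} [NormedAddCommGroup H] [InnerProductSpace ℂ H]
    [CompleteSpace H] {n : ℕ} {T : Fin n → H →L[ℂ] H} (hT : IsBeurlingTuple T) (j : Fin n)
    (M L : List (Fin n)) (hL : (M ++ L).Nodup) (hj : j ∉ M ++ L) (x : H)
    (hx : applyDelta T L (1 - adjoint (T j) * T j) x = 0) :
    applyDelta T (M ++ L) (1 - adjoint (T j) * T j) x = 0 := by
  induction M with
  | nil => exact hx
  | cons k M ih =>
    have hL' := (List.nodup_cons.1 hL).2
    have hj' : j ∉ M ++ L := fun h => hj (List.mem_cons_of_mem _ h)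
    have h0 := ih hL' hj'
    have hpos := applyDelta_isPositive hT j _ hL' hj'
    have hpos' := applyDelta_isPositive hT j _ hL hj
    have hB : 0 ≤ RCLike.re (inner ℂ x
        (T k (applyDelta T (M ++ L) (1 - adjoint (T j) * T j) (adjoint (T k) x)))) := by
      rw [← adjoint_inner_left]
      exact hpos.re_inner_nonneg_right (adjoint (T k) x)
    rw [List.cons_append, applyDelta_cons] at hpos' ⊢
    refine apply_eq_zero_of_isPositive hpos' (le_antisymm ?_ (hpos'.re_inner_nonneg_left x))
    rw [sub_apply, h0, zero_sub, inner_neg_left, map_neg, inner_re_symm]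
    exact neg_nonpos.2 hB

/-- For a Beurling tuple `T`, `j`, and `P₁ ⊆ P₂ ⊆ {1,…,n} \ {j}`, the
truncated defect spaces satisfy `𝒟_{j,T,P₂} ⊆ 𝒟_{j,T,P₁}`. -/
theorem beurling_truncDefectSpace_antitone {n : ℕ} (hn : 0 < n) (T : Fin n → H →L[ℂ] H)
    (hT : IsBeurlingTuple T) (j : Fin n) (P₁ P₂ : Finset (Fin n)) (hP : P₁ ⊆ P₂)
    (hP₂ : j ∉ P₂) :
    closure (Set.range ⇑(truncDefectSq T j P₂)) ⊆
      closure (Set.range ⇑(truncDefectSq T j P₁)) := by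
  have hperm : ((P₂ \ P₁).sort (· ≤ ·) ++ P₁.sort (· ≤ ·)).Perm (P₂.sort (· ≤ ·)) := by
    refine (List.perm_ext_iff_of_nodup ?_ (Finset.sort_nodup _ _)).2 fun a => ?_
    · refine List.Nodup.append (Finset.sort_nodup _ _) (Finset.sort_nodup _ _) ?_
      intro a; simp
    · simp only [List.mem_append, Finset.mem_sort, Finset.mem_sdiff]
      have := @hP a
      tauto
  have hj : j ∉ (P₂ \ P₁).sort (· ≤ ·) ++ P₁.sort (· ≤ ·) := by
    rw [hperm.mem_iff]; simpa using hP₂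
  have hnd := hperm.nodup_iff.2 (Finset.sort_nodup _ _)
  have hker : (truncDefectSq T j P₁).ker ≤ (truncDefectSq T j P₂).ker := by
    intro x hx
    have := applyDelta_ker hT j _ _ hnd hj x hx
    rwa [applyDelta_perm hT.1.comm hperm] at this
  have hsa : ∀ P : Finset (Fin n), j ∉ P →
      adjoint (truncDefectSq T j P) = truncDefectSq T j P := fun P hjP =>
    (applyDelta_isPositive hT j _ (Finset.sort_nodup _ _) (by simpa using hjP)).isSelfAdjoint
  have h1 := hsa P₁ fun h => hP₂ (hP h)
  have h2 := hsa P₂ hP₂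
  -- the closure of the range of a self-adjoint operator is the orthogonal complement of its kernel
  have h3 := Submodule.orthogonal_le hker
  rw [orthogonal_ker, orthogonal_ker, h1, h2] at h3
  exact h3
end

section
/- Let T = (T_1, …, T_n) be a Beurling tuple on a complex Hilbert space H, let j ∈ {1, …, n}, and let P = {p_1 < ⋯ < p_r} ⊆ {1, …, n} \ {j}. Then for every h ∈ H, the family (T_P^α D²_{j,T,P} T_P^{*α} h)_{α ∈ ℤ_+^r} is summable in H with sum D²_{T_j} h = (I − T_j* T_j) h; i.e., D²_{T_j} = Σ_{α ∈ ℤ_+^r} T_P^α D²_{j,T,P} T_P^{*α} in the strong operator topology. -/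
/-! The sum over a box `α < N` of `T_P^α D²_{j,T,P} T_P^{*α}` telescopes to
`∏_{p ∈ P} (1 - Δ_{T p}^N)` applied to `1 - Tⱼ*Tⱼ`, and by purity this tends strongly to
`1 - Tⱼ*Tⱼ`. To pass from boxes to unconditional summability it suffices that all terms are positive
(`hasSum_of_isPositive`), so the whole point is that `D²_{j,T,P}` is positive.

For this, realise `T i*` as the restriction of a backward shift: the Szegő condition and purity
give an isometry `J : H → ℓ²(ℕⁿ, H)` with `(V i)* J = J (T i)*`, where the `V i` are the doubly
commuting forward shifts (`IsSzegoTuple.exists_lifting`; that `J` is isometric is the same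
telescoping argument, applied to the identity). Put `Q = 1 - J J*`, `R i = V i Q` and
`A i = V i J - J T i = Q V i J`. Then
* `(A i)* A i = 1 - Tᵢ*Tᵢ`,
* `A j (T p)* = (R p)* A j` for `p ≠ j`,
* `A p (A q)* = (R q)* R p - R p (R q)*` for `p ≠ q`.

The Beurling condition forces `A p (A q)* = 0`, so the partial isometries `R p` doubly commute, and
the second relation gives `D²_{j,T,P} = (A j)* (∏_{p ∈ P} (1 - R p (R p)*)) A j`: a product of
commuting projections compressed by `A j` (`truncDefectSq_isPositive_of_lifting`). -/

open ContinuousLinearMap Filter Topology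

variable {H : Type*} [NormedAddCommGroup H] [InnerProductSpace ℂ H] [CompleteSpace H]

universe u

/-! ### The maps `Δ_X` -/

open scoped IsMulCommutative in
/-- A commuting family in a ring is the image of a family in a commutative ring. Products of the
`1 - Δ_{T i}` and of the `T i` can then be handled with unordered finite products. -/
lemma exists_commRing_lift {R : Type u} [Ring R] {ι : Type*} (t : ι → R)
    (ht : ∀ i j, t i * t j = t j * t i) :
    ∃ (A : Type u) (_ : CommRing A) (φ : A →+* R) (d : ι → A), ∀ i, φ (d i) = t i := by
  have hc : ∀ x ∈ Set.range t, ∀ y ∈ Set.range t, x * y = y * x := by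
    rintro _ ⟨i, rfl⟩ _ ⟨j, rfl⟩
    exact ht i j
  have := Subring.isMulCommutative_closure hc
  exact ⟨Subring.closure (Set.range t), inferInstance,
    (Subring.closure (Set.range t)).subtype,
    fun i => ⟨t i, Subring.subset_closure ⟨i, rfl⟩⟩, fun i => rfl⟩

/-- The map `Δ_X : A ↦ X A X*`, as an element of the ring of linear endomorphisms of `B(H)`. -/
noncomputable def conjEnd (X : H →L[ℂ] H) : Module.End ℂ (H →L[ℂ] H) :=
  LinearMap.mulLeftRight ℂ (X, adjoint X)

lemma conjEnd_apply (X A : H →L[ℂ] H) : conjEnd X A = X * A * adjoint X := by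
  simp [conjEnd]

lemma conjEnd_mul (X Y : H →L[ℂ] H) : conjEnd (X * Y) = conjEnd X * conjEnd Y := by
  ext1 A
  simp only [conjEnd_apply, Module.End.mul_apply, ← star_eq_adjoint, star_mul, mul_assoc]

lemma conjEnd_one : conjEnd (1 : H →L[ℂ] H) = 1 := by
  ext1 A
  simp [conjEnd_apply, ← star_eq_adjoint]

lemma conjEnd_pow (X : H →L[ℂ] H) (m : ℕ) : conjEnd (X ^ m) = conjEnd X ^ m := by
  induction m with
  | zero => simp [conjEnd_one]
  | succ m ih => rw [pow_succ, pow_succ, conjEnd_mul, ih]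

lemma conjEnd_isPositive (X : H →L[ℂ] H) {A : H →L[ℂ] H} (hA : A.IsPositive) :
    (conjEnd X A).IsPositive := by
  rw [conjEnd_apply]
  exact hA.conj_adjoint X

/-! ### Sums of positive operators -/

omit [CompleteSpace H] in
lemma isPositive_iff_inner_nonneg (A : H →L[ℂ] H) :
    A.IsPositive ↔ ∀ x, 0 ≤ (inner ℂ (A x) x).re ∧ (inner ℂ (A x) x).im = 0 := by
  rw [isPositive_iff_complex]
  refine forall_congr' fun x => ?_
  rw [and_comm]
  refine and_congr Iff.rfl ?_
  rw [Complex.ext_iff]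
  simp [eq_comm]

lemma isPositive_exists_adjoint_mul {A : H →L[ℂ] H} (hA : A.IsPositive) :
    ∃ B : H →L[ℂ] H, A = adjoint B * B := by
  rw [← nonneg_iff_isPositive] at hA
  exact CStarAlgebra.nonneg_iff_eq_star_mul_self.1 hA

lemma re_inner_adjoint_mul (B : H →L[ℂ] H) (x : H) :
    (inner ℂ ((adjoint B * B) x) x).re = ‖B x‖ ^ 2 :=
  (apply_norm_sq_eq_inner_adjoint_left B x).symm

/-- Cauchy–Schwarz for the semi-inner product of a positive operator. -/
lemma isPositive_norm_apply_sq_le {A : H →L[ℂ] H} (hA : A.IsPositive) (x : H) :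
    ‖A x‖ ^ 2 ≤ ‖A‖ * (inner ℂ (A x) x).re := by
  obtain ⟨B, rfl⟩ := isPositive_exists_adjoint_mul hA
  rw [re_inner_adjoint_mul]
  have h1 : ‖adjoint B * B‖ = ‖B‖ * ‖B‖ := norm_adjoint_comp_self B
  have h2 : ‖(adjoint B * B) x‖ ≤ ‖B‖ * ‖B x‖ := by
    have := (adjoint B).le_opNorm (B x)
    rwa [LinearIsometryEquiv.norm_map] at this
  rw [h1]
  calc _ ≤ (‖B‖ * ‖B x‖) ^ 2 := by gcongr
    _ = _ := by ring

/-- A family of positive operators whose partial sums along one exhausting sequence of finite sets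
converge strongly is unconditionally strongly summable. -/
lemma hasSum_of_isPositive {ι : Type*} {F : ι → H →L[ℂ] H} (hF : ∀ i, (F i).IsPositive)
    {D : H →L[ℂ] H} {s : ℕ → Finset ι} (hs : Tendsto s atTop atTop)
    (hD : ∀ x, Tendsto (fun N => (∑ i ∈ s N, F i) x) atTop (𝓝 (D x))) (x : H) :
    HasSum (fun i => F i x) (D x) := by
  have hmono : ∀ u v : Finset ι, u ⊆ v → ∑ i ∈ u, F i ≤ ∑ i ∈ v, F i := fun u v huv =>
    Finset.sum_le_sum_of_subset_of_nonneg huv fun i _ _ => (nonneg_iff_isPositive _).2 (hF i)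
  -- positivity of `D - ∑_u F` is a closed condition, met by the sums over `s N` for large `N`
  have hle : ∀ u : Finset ι, ∑ i ∈ u, F i ≤ D := by
    intro u
    rw [ContinuousLinearMap.le_def, isPositive_iff_inner_nonneg]
    intro y
    have hev : ∀ᶠ N in atTop,
        0 ≤ (inner ℂ ((∑ i ∈ s N, F i - ∑ i ∈ u, F i) y) y).re ∧
          (inner ℂ ((∑ i ∈ s N, F i - ∑ i ∈ u, F i) y) y).im = 0 := by
      filter_upwards [hs.eventually_ge_atTop u] with N hN
      exact (isPositive_iff_inner_nonneg _).1 ((ContinuousLinearMap.le_def _ _).1 (hmono _ _ hN)) y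
    have hlim : Tendsto (fun N => inner ℂ ((∑ i ∈ s N, F i - ∑ i ∈ u, F i) y) y) atTop
        (𝓝 (inner ℂ ((D - ∑ i ∈ u, F i) y) y)) :=
      ((hD y).sub_const _).inner tendsto_const_nhds
    refine ⟨ge_of_tendsto ((Complex.continuous_re.tendsto _).comp hlim)
      (hev.mono fun N hN => hN.1), ?_⟩
    refine tendsto_nhds_unique ((Complex.continuous_im.tendsto _).comp hlim) ?_
    exact tendsto_const_nhds.congr' (hev.mono fun N hN => hN.2.symm)
  have hbd : ∀ u v : Finset ι, u ⊆ v → ‖D x - ∑ i ∈ v, F i x‖ ^ 2 ≤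
      ‖D‖ * (inner ℂ (D x - (∑ i ∈ u, F i) x) x).re := by
    intro u v huv
    have hv := isPositive_norm_apply_sq_le ((ContinuousLinearMap.le_def _ _).1 (hle v)) x
    have hn : ‖D - ∑ i ∈ v, F i‖ ≤ ‖D‖ := by
      apply CStarAlgebra.norm_le_norm_of_nonneg_of_le (sub_nonneg.2 (hle v))
      exact sub_le_self _ (Finset.sum_nonneg fun i _ => (nonneg_iff_isPositive _).2 (hF i))
    have hi : (inner ℂ ((D - ∑ i ∈ v, F i) x) x).re ≤ (inner ℂ ((D - ∑ i ∈ u, F i) x) x).re := by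
      have := ((isPositive_iff_inner_nonneg _).1 ((ContinuousLinearMap.le_def _ _).1 (hmono u v huv)) x).1
      simp only [sub_apply, inner_sub_left, Complex.sub_re] at this ⊢
      linarith
    have h0 := ((isPositive_iff_inner_nonneg _).1 ((ContinuousLinearMap.le_def _ _).1 (hle v)) x).1
    have e : D x - ∑ i ∈ v, F i x = (D - ∑ i ∈ v, F i) x := by simp
    rw [e]
    calc _ ≤ _ := hv
      _ ≤ _ := mul_le_mul hn hi h0 (norm_nonneg _)
  have hlim : Tendsto (fun N => ‖D‖ * (inner ℂ (D x - (∑ i ∈ s N, F i) x) x).re) atTop (𝓝 0) := by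
    have h1 : Tendsto (fun N => D x - (∑ i ∈ s N, F i) x) atTop (𝓝 (D x - D x)) :=
      (hD x).const_sub _
    have h2 := (Complex.continuous_re.tendsto _).comp (h1.inner (tendsto_const_nhds (x := x)))
    have h3 := h2.const_mul ‖D‖
    rw [sub_self, inner_zero_left, Complex.zero_re, mul_zero] at h3
    exact h3
  classical
  rw [HasSum, SummationFilter.unconditional_filter, Metric.tendsto_atTop]
  intro ε hε
  obtain ⟨N, hN⟩ := (hlim.eventually (gt_mem_nhds (pow_pos hε 2))).exists
  refine ⟨s N, fun v hv => ?_⟩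
  rw [dist_comm, dist_eq_norm]
  exact lt_of_pow_lt_pow_left₀ 2 hε.le ((hbd _ _ hv).trans_lt hN)

/-! ### Telescoping over boxes -/

section Telescoping

variable {ι : Type*} {A : Type*} [CommRing A] (φ : A →+* Module.End ℂ (H →L[ℂ] H)) (d : ι → A)
  (T : ι → H →L[ℂ] H)

lemma map_pow_apply (hd : ∀ i, φ (d i) = conjEnd (T i)) (i : ι) (m : ℕ) (X : H →L[ℂ] H) :
    φ (d i ^ m) X = T i ^ m * X * adjoint (T i) ^ m := by
  rw [map_pow, hd, ← conjEnd_pow, conjEnd_apply]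
  simp only [← star_eq_adjoint, star_pow]

lemma isPositive_map_prod (hd : ∀ i, φ (d i) = conjEnd (T i)) (u : Finset ι) (α : ι → ℕ)
    {X : H →L[ℂ] H} (hX : X.IsPositive) : (φ (∏ i ∈ u, d i ^ α i) X).IsPositive := by
  classical
  induction u using Finset.induction_on with
  | empty => simpa using hX
  | insert i u hi ih =>
    rw [Finset.prod_insert hi, map_mul, Module.End.mul_apply, map_pow, hd, ← conjEnd_pow]
    exact conjEnd_isPositive _ ih

/-- Purity makes `∏ (1 - Δ_{T i}^N)` tend to the identity, pointwise in the strong topology. The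
norm bound is what lets the induction on the number of factors go through. -/
lemma tendsto_prod_one_sub_pow (hd : ∀ i, φ (d i) = conjEnd (T i)) (hT : ∀ i, ‖T i‖ ≤ 1)
    (hp : ∀ i (x : H), Tendsto (fun m : ℕ => (adjoint (T i) ^ m) x) atTop (𝓝 0))
    (X : H →L[ℂ] H) (u : Finset ι) :
    (∃ C, ∀ N : ℕ, ‖φ (∏ i ∈ u, (1 - d i ^ N)) X‖ ≤ C) ∧
      ∀ x, Tendsto (fun N : ℕ => φ (∏ i ∈ u, (1 - d i ^ N)) X x) atTop (𝓝 (X x)) := by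
  classical
  induction u using Finset.induction_on with
  | empty => exact ⟨⟨‖X‖, by simp⟩, by simp⟩
  | insert i u hi ih =>
    obtain ⟨⟨C, hC⟩, hx⟩ := ih
    have key : ∀ N, φ (∏ j ∈ insert i u, (1 - d j ^ N)) X =
        φ (∏ j ∈ u, (1 - d j ^ N)) X -
          T i ^ N * φ (∏ j ∈ u, (1 - d j ^ N)) X * adjoint (T i) ^ N := by
      intro N
      rw [Finset.prod_insert hi, map_mul, Module.End.mul_apply, map_sub, map_one,
        LinearMap.sub_apply, map_pow_apply φ d T hd]
      rfl
    have hTn : ∀ N, ‖T i ^ N‖ ≤ 1 := fun N => opNorm_le_bound _ zero_le_one fun x => by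
      induction N generalizing x with
      | zero => simp
      | succ N ih =>
        rw [pow_succ]
        calc ‖(T i ^ N) (T i x)‖ ≤ 1 * ‖T i x‖ := ih _
          _ ≤ 1 * (1 * ‖x‖) := by gcongr; exact (T i).le_of_opNorm_le (hT i) x
          _ = _ := by ring
    have hbd : ∀ N (Y : H →L[ℂ] H) x, ‖(T i ^ N * Y * adjoint (T i) ^ N) x‖ ≤
        ‖Y‖ * ‖(adjoint (T i) ^ N) x‖ := by
      intro N Y x
      calc ‖(T i ^ N) (Y ((adjoint (T i) ^ N) x))‖
          ≤ 1 * ‖Y ((adjoint (T i) ^ N) x)‖ := (T i ^ N).le_of_opNorm_le (hTn N) _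
        _ ≤ _ := by rw [one_mul]; exact Y.le_opNorm _
    refine ⟨⟨C + C, fun N => ?_⟩, fun x => ?_⟩
    · rw [key]
      refine (norm_sub_le _ _).trans (add_le_add (hC N) ?_)
      have hTs : ‖adjoint (T i) ^ N‖ ≤ 1 := by
        rw [← star_eq_adjoint, ← star_pow, norm_star]
        exact hTn N
      refine opNorm_le_bound _ ((norm_nonneg _).trans (hC N)) fun x => (hbd N _ x).trans ?_
      have := (adjoint (T i) ^ N).le_of_opNorm_le hTs x
      rw [one_mul] at this
      gcongr
      · exact (norm_nonneg _).trans (hC N)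
      · exact hC N
    · simp only [key, sub_apply]
      have : Tendsto (fun N => (T i ^ N * φ (∏ j ∈ u, (1 - d j ^ N)) X * adjoint (T i) ^ N) x)
          atTop (𝓝 0) := by
        refine squeeze_zero_norm (a := fun N => C * ‖(adjoint (T i) ^ N) x‖) (fun N => ?_) ?_
        · exact (hbd N _ x).trans (by gcongr; exact hC N)
        · simpa using ((hp i x).norm.const_mul C)
      simpa using (hx x).sub this

/-- If `F = ∏ (1 - Δ_{T i}) X` is positive, then `X = ∑_α T^α F T^{*α}` strongly: sums over boxes
telescope to `∏ (1 - Δ_{T i}^N) X`. -/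
lemma hasSum_of_isPositive_prod [Fintype ι] (hd : ∀ i, φ (d i) = conjEnd (T i))
    (hT : ∀ i, ‖T i‖ ≤ 1)
    (hp : ∀ i (x : H), Tendsto (fun m : ℕ => (adjoint (T i) ^ m) x) atTop (𝓝 0))
    (X : H →L[ℂ] H) (hX : (φ (∏ i, (1 - d i)) X).IsPositive) (x : H) :
    HasSum (fun α : ι → ℕ => φ (∏ i, d i ^ α i) (φ (∏ i, (1 - d i)) X) x) (X x) := by
  classical
  refine hasSum_of_isPositive (F := fun α : ι → ℕ => φ (∏ i, d i ^ α i) (φ (∏ i, (1 - d i)) X))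
    (fun α => isPositive_map_prod φ d T hd _ α hX)
    (s := fun N => Fintype.piFinset fun _ => Finset.range N) ?_ ?_ x
  · refine tendsto_atTop_finset_of_monotone ?_ fun α => ?_
    · intro M N hMN
      exact Fintype.piFinset_subset _ _ fun i => Finset.range_mono hMN
    · refine ⟨∑ i, α i + 1, ?_⟩
      rw [Fintype.mem_piFinset]
      intro i
      rw [Finset.mem_range, Nat.lt_succ_iff]
      exact Finset.single_le_sum (f := α) (fun _ _ => Nat.zero_le _) (Finset.mem_univ i)
  · intro y
    have key : ∀ N : ℕ, ∑ α ∈ Fintype.piFinset (fun _ : ι => Finset.range N),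
        φ (∏ i, d i ^ α i) (φ (∏ i, (1 - d i)) X) = φ (∏ i, (1 - d i ^ N)) X := by
      intro N
      rw [← LinearMap.sum_apply, ← map_sum, ← Module.End.mul_apply, ← map_mul,
        ← Finset.prod_univ_sum (fun _ : ι => Finset.range N) (fun i k => d i ^ k),
        ← Finset.prod_mul_distrib]
      congr 2
      exact Finset.prod_congr rfl fun i _ => geom_sum_mul_neg (d i) N
    simp only [key]
    exact (tendsto_prod_one_sub_pow φ d T hd hT hp X Finset.univ).2 y

end Telescoping

/-! ### The given operators as products of commuting maps -/

section Encoding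

variable {n : ℕ} {A : Type*} [CommRing A] (φ : A →+* Module.End ℂ (H →L[ℂ] H)) (d : Fin n → A)
  (T : Fin n → H →L[ℂ] H)

lemma applyDelta_eq (hd : ∀ i, φ (d i) = conjEnd (T i)) (L : List (Fin n)) (X : H →L[ℂ] H) :
    applyDelta T L X = φ (L.map fun k => 1 - d k).prod X := by
  induction L with
  | nil => simp [applyDelta]
  | cons k L ih =>
    rw [List.map_cons, List.prod_cons, map_mul, Module.End.mul_apply, ← ih, map_sub, map_one,
      hd, LinearMap.sub_apply, conjEnd_apply]
    rfl

lemma truncDefectSq_eq (hd : ∀ i, φ (d i) = conjEnd (T i)) (j : Fin n) (P : Finset (Fin n)) :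
    truncDefectSq T j P = φ (∏ p : ↥P, (1 - d p)) (1 - adjoint (T j) * T j) := by
  rw [truncDefectSq, applyDelta_eq φ d T hd, Finset.prod_coe_sort P fun p => 1 - d p,
    Finset.prod_eq_multiset_prod, ← Finset.sort_eq P (· ≤ ·), Multiset.map_coe, Multiset.prod_coe]

lemma finPow_conj (hd : ∀ i, φ (d i) = conjEnd (T i)) (k : Fin n → ℕ) (X : H →L[ℂ] H) :
    finPow T k * X * adjoint (finPow T k) = φ (∏ i, d i ^ k i) X := by
  rw [Fin.prod_univ_def, finPow, ← conjEnd_apply]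
  congr 1
  induction List.finRange n with
  | nil => simp [conjEnd_one]
  | cons i L ih =>
    rw [List.map_cons, List.prod_cons, List.map_cons, List.prod_cons, conjEnd_mul, ih, map_mul,
      conjEnd_pow, map_pow, hd]

lemma prod_pow_extendSupport (P : Finset (Fin n)) (α : ↥P → ℕ) :
    ∏ i, d i ^ extendSupport P α i = ∏ p : ↥P, d p ^ α p := by
  rw [← Finset.prod_subset (Finset.subset_univ P), ← Finset.prod_coe_sort P]
  · exact Finset.prod_congr rfl fun p _ => by simp [extendSupport]
  · intro i _ hi
    simp [extendSupport, hi]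

/-- Expanding the product `∏ (1 - Δ_{T i})` gives the alternating sum defining `𝕊ₙ⁻¹(T, T*)`. -/
lemma szegoInv_eq (hd : ∀ i, φ (d i) = conjEnd (T i)) :
    szegoInv T = φ (∏ i, (1 - d i)) 1 := by
  have h1 : ∏ i, (1 - d i) = ∑ k : Fin n → Bool,
      (-1) ^ (∑ i, if k i then 1 else 0) * ∏ i, d i ^ (if k i then 1 else 0) := by
    have : ∀ i, 1 - d i = ∑ b : Bool, (-1) ^ (if b then 1 else 0) * d i ^ (if b then 1 else 0) := by
      intro i
      simp [sub_eq_neg_add]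
    simp only [this]
    rw [Finset.prod_univ_sum, Fintype.piFinset_univ]
    simp only [Finset.prod_mul_distrib, Finset.prod_pow_eq_pow_sum]
  rw [h1, szegoInv, map_sum, LinearMap.sum_apply]
  refine Finset.sum_congr rfl fun k _ => ?_
  have h2 := finPow_conj φ d T hd (fun i => if k i then 1 else 0) 1
  rw [mul_one] at h2
  rw [h2]
  generalize (∑ i, if k i then 1 else 0) = m
  rcases Nat.even_or_odd m with hm | hm
  · rw [hm.neg_one_pow, hm.neg_one_pow, one_mul, one_smul]
  · rw [hm.neg_one_pow, hm.neg_one_pow, neg_one_mul, neg_smul, one_smul, map_neg]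
    rfl

end Encoding

/-! ### Positivity of the truncated defect operators -/

section DoublyCommuting

variable {n : ℕ}

/-- If the `R i` are doubly commuting partial isometries, then `∏ (1 - Δ_{R i})(1)` is the product
of the commuting projections `1 - R i (R i)*`. -/
lemma applyDelta_one_isStarProjection (R : Fin n → H →L[ℂ] H)
    (hc : ∀ i j, R i * R j = R j * R i)
    (hdc : ∀ i j, i ≠ j → star (R i) * R j = R j * star (R i))
    (hpi : ∀ i, R i * star (R i) * R i = R i) (L : List (Fin n)) (hL : L.Nodup) :
    IsStarProjection (applyDelta R L 1) ∧
      ∀ q ∉ L, Commute (applyDelta R L 1) (R q) ∧ Commute (applyDelta R L 1) (star (R q)) := by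
  induction L with
  | nil => exact ⟨.one _, fun q _ => ⟨Commute.one_left _, Commute.one_left _⟩⟩
  | cons p L ih =>
    obtain ⟨hB, hBc⟩ := ih hL.of_cons
    obtain ⟨h1, h2⟩ := hBc p (List.nodup_cons.1 hL).1
    have e : applyDelta R (p :: L) 1 = applyDelta R L 1 * (1 - R p * star (R p)) := by
      change applyDelta R L 1 - R p * applyDelta R L 1 * star (R p) = _
      rw [← h1.eq, mul_sub, mul_one, mul_assoc]
    have hE : IsStarProjection (1 - R p * star (R p)) := by
      refine IsStarProjection.one_sub ⟨?_, .mul_star_self _⟩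
      change R p * star (R p) * (R p * star (R p)) = R p * star (R p)
      rw [← mul_assoc, hpi]
    rw [e]
    refine ⟨hB.mul hE ((Commute.one_right _).sub_right (h1.mul_right h2)), fun q hq => ?_⟩
    obtain ⟨hqp, hqL⟩ := not_or.1 (List.mem_cons.not.1 hq)
    obtain ⟨h3, h4⟩ := hBc q hqL
    have h5 : Commute (R p) (R q) := hc p q
    have h6 : Commute (star (R p)) (R q) := hdc p q (Ne.symm hqp)
    have h7 : Commute (star (R q)) (R p) := hdc q p hqp
    have h8 : Commute (star (R p)) (star (R q)) := h5.star_star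
    exact ⟨h3.mul_left ((Commute.one_left _).sub_left (h5.mul_left h6)),
      h4.mul_left ((Commute.one_left _).sub_left (h7.symm.mul_left h8))⟩

variable {K : Type*} [NormedAddCommGroup K] [InnerProductSpace ℂ K] [CompleteSpace K]

/-- If `A` intertwines `(T p)*` with `(R p)*`, the compression `X ↦ A* X A` intertwines `Δ_{R p}`
with `Δ_{T p}`. -/
lemma applyDelta_intertwine (T : Fin n → H →L[ℂ] H) (R : Fin n → K →L[ℂ] K) (A : H →L[ℂ] K)
    (X : K →L[ℂ] K) (L : List (Fin n))
    (hA : ∀ p ∈ L, A ∘L adjoint (T p) = adjoint (R p) ∘L A) :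
    applyDelta T L (adjoint A ∘L X ∘L A) = adjoint A ∘L applyDelta R L X ∘L A := by
  induction L with
  | nil => rfl
  | cons p L ih =>
    have h1 := hA p List.mem_cons_self
    have h2 : T p ∘L adjoint A = adjoint A ∘L R p := by
      simpa [adjoint_comp] using congrArg adjoint h1
    have h1' := fun x => DFunLike.congr_fun h1 x
    have h2' := fun x => DFunLike.congr_fun h2 x
    simp only [comp_apply] at h1' h2'
    change applyDelta T L _ - T p * applyDelta T L _ * adjoint (T p) =
      adjoint A ∘L (applyDelta R L X - R p * applyDelta R L X * adjoint (R p)) ∘L A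
    rw [ih fun q hq => hA q (List.mem_cons_of_mem _ hq)]
    ext x
    simp [h1', h2']

/-- If the positive operators `A*A` and `B*B` have product zero, then so do `A` and `B*`: both
reductions are the cancellation `E*E = 0 → E = 0`. -/
lemma comp_adjoint_eq_zero (A B : H →L[ℂ] K)
    (h : (adjoint A ∘L A) ∘L (adjoint B ∘L B) = 0) : A ∘L adjoint B = 0 := by
  have h1 : A ∘L adjoint B ∘L B = 0 := by
    rw [← adjoint_comp_self_eq_zero_iff]
    have : adjoint (A ∘L adjoint B ∘L B) ∘L (A ∘L adjoint B ∘L B) =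
        adjoint (adjoint B ∘L B) ∘L ((adjoint A ∘L A) ∘L (adjoint B ∘L B)) := by
      simp only [adjoint_comp, comp_assoc]
    rw [this, h, comp_zero]
  have h2 : adjoint (A ∘L adjoint B) = 0 := by
    rw [← adjoint_comp_self_eq_zero_iff]
    have : adjoint (adjoint (A ∘L adjoint B)) ∘L adjoint (A ∘L adjoint B) =
        (A ∘L adjoint B ∘L B) ∘L adjoint A := by
      simp only [adjoint_comp, adjoint_adjoint, comp_assoc]
    rw [this, h1, zero_comp]
  simpa using congrArg adjoint h2

/-- Positivity of the truncated defect operators, given a doubly commuting isometric lifting `V` of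
`T` through an isometry `J`. The restrictions `R i` of the `V i` to the complement of the range of
`J` (extended by zero) are partial isometries, and `A i = V i J - J T i` satisfies
`(A i)* A i = 1 - (T i)* T i` and `A i (A j)* = (R j)* R i - R i (R j)*`; so the Beurling condition
says precisely that `R` is doubly commuting. -/
lemma truncDefectSq_isPositive_of_lifting (T : Fin n → H →L[ℂ] H)
    (hB : ∀ i j, i ≠ j → (1 - adjoint (T i) * T i) * (1 - adjoint (T j) * T j) = 0)
    (V : Fin n → K →L[ℂ] K) (J : H →L[ℂ] K)
    (hV : ∀ i, adjoint (V i) * V i = 1) (hVc : ∀ i j, V i * V j = V j * V i)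
    (hVdc : ∀ i j, i ≠ j → adjoint (V i) * V j = V j * adjoint (V i))
    (hJ : adjoint J ∘L J = 1) (hVJ : ∀ i, adjoint (V i) ∘L J = J ∘L adjoint (T i))
    (j : Fin n) (P : Finset (Fin n)) (hP : j ∉ P) : (truncDefectSq T j P).IsPositive := by
  have f1 : ∀ x, adjoint J (J x) = x := fun x => DFunLike.congr_fun hJ x
  have f2 : ∀ i x, adjoint (V i) (J x) = J (adjoint (T i) x) := fun i x =>
    DFunLike.congr_fun (hVJ i) x
  have f3 : ∀ i x, adjoint J (V i x) = T i (adjoint J x) := fun i x => by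
    have := congrArg adjoint (hVJ i)
    simp only [adjoint_comp, adjoint_adjoint] at this
    exact DFunLike.congr_fun this x
  have f4 : ∀ i x, adjoint (V i) (V i x) = x := fun i x => DFunLike.congr_fun (hV i) x
  have f5 : ∀ i j x, i ≠ j → adjoint (V i) (V j x) = V j (adjoint (V i) x) := fun i j x hij =>
    DFunLike.congr_fun (hVdc i j hij) x
  have f6 : ∀ i j x, V i (V j x) = V j (V i x) := fun i j x => DFunLike.congr_fun (hVc i j) x
  let A : Fin n → H →L[ℂ] K := fun i => V i ∘L J - J ∘L T i
  let R : Fin n → K →L[ℂ] K := fun i => V i - V i ∘L J ∘L adjoint J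
  have hA : ∀ i x, A i x = V i (J x) - J (T i x) := fun i x => rfl
  have hR : ∀ i x, R i x = V i x - V i (J (adjoint J x)) := fun i x => rfl
  have hA' : ∀ i x, adjoint (A i) x = adjoint J (adjoint (V i) x) - adjoint (T i) (adjoint J x) :=
    fun i x => by simp [A, adjoint_comp]
  have hR' : ∀ i x, adjoint (R i) x = adjoint (V i) x - J (adjoint J (adjoint (V i) x)) :=
    fun i x => by simp [R, adjoint_comp]
  have hAA : ∀ i, 1 - adjoint (T i) * T i = adjoint (A i) ∘L A i := by
    intro i
    ext x
    simp [hA, hA', f1, f2, f3, f4]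
  have hAT : ∀ p, p ≠ j → A j ∘L adjoint (T p) = adjoint (R p) ∘L A j := by
    intro p hp
    ext x
    simp [hA, hR', f1, f2, f3, f5 p j _ hp]
  -- the Beurling condition, read on the lifting
  have hAB : ∀ p q, p ≠ q → A p ∘L adjoint (A q) = 0 := by
    intro p q hpq
    apply comp_adjoint_eq_zero
    rw [← hAA, ← hAA]
    exact hB p q hpq
  have hRc : ∀ p q, R p * R q = R q * R p := by
    intro p q
    ext x
    simp [hR, f1, f3, f6 p q]
  have hRdc : ∀ q p, q ≠ p → star (R q) * R p = R p * star (R q) := by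
    intro q p hqp
    ext x
    have h0 := DFunLike.congr_fun (hAB p q hqp.symm) x
    simp only [comp_apply, hA, hA', map_sub, zero_apply] at h0
    rw [← sub_eq_zero, ← h0]
    simp [star_eq_adjoint, hR, hR', f1, f2, f3, f5 q p _ hqp]
    abel
  have hRpi : ∀ p, R p * star (R p) * R p = R p := by
    intro p
    ext x
    simp [star_eq_adjoint, hR, hR', f1, f4]
  have hproj := (applyDelta_one_isStarProjection R hRc hRdc hRpi (P.sort (· ≤ ·))
    (Finset.sort_nodup _ _)).1
  have key := applyDelta_intertwine T R (A j) 1 (P.sort (· ≤ ·)) fun p hp =>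
    hAT p fun h => hP (h ▸ (Finset.mem_sort _).1 hp)
  rw [truncDefectSq, hAA]
  change (applyDelta T _ (adjoint (A j) ∘L 1 ∘L A j)).IsPositive
  rw [key]
  exact (IsPositive.of_isStarProjection hproj).adjoint_conj (A j)

end DoublyCommuting

/-! ### Shifts on `ℓ²` -/

section Shift

variable {ι : Type*} {σ : ι → ι}

omit [InnerProductSpace ℂ H] [CompleteSpace H] in
lemma memlp_extend (hσ : σ.Injective) (f : lp (fun _ : ι => H) 2) :
    Memℓp (E := fun _ : ι => H) (Function.extend σ f 0) 2 := by
  have h := (memℓp_gen_iff (by norm_num)).1 f.2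
  rw [memℓp_gen_iff (by norm_num)]
  rw [← hσ.summable_iff]
  · simpa [Function.comp_def, hσ.extend_apply] using h
  · intro k hk
    rw [Function.extend_apply' _ _ _ (by simpa using hk)]
    simp

/-- The isometry of `ℓ²(ι, H)` that moves the coordinate `k` to the coordinate `σ k`. -/
noncomputable def pushIsometry (hσ : σ.Injective) :
    lp (fun _ : ι => H) 2 →ₗᵢ[ℂ] lp (fun _ : ι => H) 2 where
  toFun f := ⟨Function.extend σ f 0, memlp_extend hσ f⟩
  map_add' f g := by
    ext k
    change Function.extend σ (fun i => f i + g i) 0 k =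
      Function.extend σ f 0 k + Function.extend σ g 0 k
    by_cases hk : ∃ i, σ i = k
    · obtain ⟨i, rfl⟩ := hk
      simp only [hσ.extend_apply]
    · simp [Function.extend_apply' _ _ _ hk]
  map_smul' c f := by
    ext k
    by_cases hk : ∃ i, σ i = k
    · obtain ⟨i, rfl⟩ := hk
      simp [hσ.extend_apply]
    · simp [Function.extend_apply' _ _ _ hk]
  norm_map' f := by
    have h2 : 0 < (2 : ENNReal).toReal := by norm_num
    rw [lp.norm_eq_tsum_rpow h2, lp.norm_eq_tsum_rpow h2]
    congr 1
    rw [← hσ.tsum_eq]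
    · simp [hσ.extend_apply]
    · intro k hk
      by_contra hk'
      apply hk
      simp [Function.extend_apply' _ _ _ hk']

omit [CompleteSpace H] in
lemma pushIsometry_apply_apply (hσ : σ.Injective) (f : lp (fun _ : ι => H) 2) (i : ι) :
    pushIsometry hσ f (σ i) = f i :=
  hσ.extend_apply _ _ _

omit [CompleteSpace H] in
lemma pushIsometry_apply_of_notMem (hσ : σ.Injective) (f : lp (fun _ : ι => H) 2) (k : ι)
    (hk : ¬ ∃ i, σ i = k) : pushIsometry hσ f k = 0 :=
  Function.extend_apply' _ _ _ hk

lemma adjoint_pushIsometry_apply (hσ : σ.Injective) (f : lp (fun _ : ι => H) 2) (i : ι) :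
    adjoint (pushIsometry hσ).toContinuousLinearMap f i = f (σ i) := by
  classical
  -- pair with a vector supported at the single coordinate `i`
  refine ext_inner_left ℂ fun a => ?_
  have h : pushIsometry hσ (lp.single 2 i a) = lp.single 2 (σ i) a := by
    ext k
    by_cases hk : ∃ i', σ i' = k
    · obtain ⟨i', rfl⟩ := hk
      rw [pushIsometry_apply_apply]
      by_cases hi : i' = i
      · subst hi
        simp
      · simp [hi, hσ.ne hi]
    · rw [pushIsometry_apply_of_notMem hσ _ _ hk]
      have : k ≠ σ i := fun h => hk ⟨i, h.symm⟩
      simp [this]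
  refine (lp.inner_single_left (𝕜 := ℂ) (G := fun _ : ι => H) i a _).symm.trans
    (Eq.trans ?_ (lp.inner_single_left (𝕜 := ℂ) (G := fun _ : ι => H) (σ i) a f))
  rw [← h, adjoint_inner_right]
  rfl

end Shift

/-! ### The dilation of a Szegő tuple -/

section Dilation

variable {n : ℕ}

lemma injective_add_single (i : Fin n) :
    Function.Injective fun k : Fin n → ℕ => k + Pi.single i 1 :=
  add_left_injective _

omit [CompleteSpace H] in
lemma finPow_add_single (T : Fin n → H →L[ℂ] H) (hT : ∀ i j, T i * T j = T j * T i)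
    (k : Fin n → ℕ) (i : Fin n) : finPow T (k + Pi.single i 1) = T i * finPow T k := by
  obtain ⟨A, _, φ, d, hd⟩ := exists_commRing_lift T hT
  have h : ∀ k : Fin n → ℕ, finPow T k = φ (∏ i, d i ^ k i) := by
    intro k
    rw [Fin.prod_univ_def, map_list_prod, List.map_map, finPow]
    simp [Function.comp_def, hd]
  rw [h, h, ← hd, ← map_mul]
  congr 1
  simp only [Pi.add_apply, pow_add, Finset.prod_mul_distrib]
  rw [mul_comm, Finset.prod_eq_single i (fun j _ hj => by simp [hj]) (by simp)]
  simp

/-- The forward shift of `ℓ²(ℕⁿ, H)` in the direction `i`. -/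
noncomputable def shift (H : Type*) [NormedAddCommGroup H] [InnerProductSpace ℂ H]
    [CompleteSpace H] (i : Fin n) :
    lp (fun _ : Fin n → ℕ => H) 2 →L[ℂ] lp (fun _ : Fin n → ℕ => H) 2 :=
  (pushIsometry (injective_add_single i)).toContinuousLinearMap

lemma shift_apply_add (i : Fin n) (f : lp (fun _ : Fin n → ℕ => H) 2) (k : Fin n → ℕ) :
    shift H i f (k + Pi.single i 1) = f k :=
  pushIsometry_apply_apply (injective_add_single i) f k

lemma shift_apply_zero (i : Fin n) (f : lp (fun _ : Fin n → ℕ => H) 2) (k : Fin n → ℕ)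
    (hk : k i = 0) : shift H i f k = 0 := by
  refine pushIsometry_apply_of_notMem (injective_add_single i) f k ?_
  rintro ⟨l, rfl⟩
  simp at hk

lemma adjoint_shift_apply (i : Fin n) (f : lp (fun _ : Fin n → ℕ => H) 2) (k : Fin n → ℕ) :
    adjoint (shift H i) f k = f (k + Pi.single i 1) :=
  adjoint_pushIsometry_apply (injective_add_single i) f k

lemma exists_eq_add_single (i : Fin n) {k : Fin n → ℕ} (hk : k i ≠ 0) :
    ∃ l : Fin n → ℕ, k = l + Pi.single i 1 := by
  refine ⟨k - Pi.single i 1, ?_⟩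
  ext j
  by_cases hj : j = i
  · subst hj
    simp
    lia
  · simp [hj]

lemma adjoint_shift_mul_shift_self (i : Fin n) : adjoint (shift H i) * shift H i = 1 := by
  ext f k
  simp [adjoint_shift_apply, shift_apply_add]

lemma adjoint_shift_mul_shift (i j : Fin n) (hij : i ≠ j) :
    adjoint (shift H i) * shift H j = shift H j * adjoint (shift H i) := by
  ext f k
  change adjoint (shift H i) (shift H j f) k = shift H j (adjoint (shift H i) f) k
  rw [adjoint_shift_apply]
  by_cases hk : k j = 0
  · rw [shift_apply_zero j _ k hk, shift_apply_zero]
    simp [hk, hij.symm]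
  · obtain ⟨l, rfl⟩ := exists_eq_add_single j hk
    rw [add_right_comm, shift_apply_add, shift_apply_add, adjoint_shift_apply]

lemma shift_comm (i j : Fin n) : shift H i * shift H j = shift H j * shift H i := by
  have h : adjoint (shift H i) * adjoint (shift H j) = adjoint (shift H j) * adjoint (shift H i) := by
    ext f k
    simp [adjoint_shift_apply, add_right_comm]
  simpa only [← star_eq_adjoint, star_mul, star_star] using (congrArg star h).symm

/-- Poisson-kernel dilation: if `𝕊ₙ⁻¹(T, T*) = B*B`, then `J h = (B T^{*k} h)_k` embeds `H`
isometrically in `ℓ²(ℕⁿ, H)`, and intertwines each `T i*` with a backward shift. -/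
lemma IsSzegoTuple.exists_lifting {T : Fin n → H →L[ℂ] H} (hT : IsSzegoTuple T) :
    ∃ J : H →L[ℂ] lp (fun _ : Fin n → ℕ => H) 2,
      adjoint J ∘L J = 1 ∧ ∀ i, adjoint (shift H i) ∘L J = J ∘L adjoint (T i) := by
  obtain ⟨A, _, φ, d, hd⟩ := exists_commRing_lift (fun i => conjEnd (T i)) fun i j => by
    simp only [← conjEnd_mul, hT.comm i j]
  have hS := szegoInv_eq φ d T hd
  obtain ⟨B, hB⟩ := isPositive_exists_adjoint_mul hT.pos
  -- the series `∑ T^k (B*B) T^{*k} x = x`, paired with `x`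
  have hsum : ∀ x : H, HasSum (fun k : Fin n → ℕ => ‖B (adjoint (finPow T k) x)‖ ^ 2)
      (‖x‖ ^ 2) := by
    intro x
    have h := hasSum_of_isPositive_prod φ d T hd hT.contraction hT.pure 1 (hS ▸ hT.pos) x
    rw [← hS] at h
    have h2 := (Complex.reCLM.hasSum (h.mapL (innerSL ℂ x)))
    simp only [← finPow_conj φ d T hd] at h2
    convert h2 using 1
    · ext k
      rw [hB, norm_sq_eq_re_inner (𝕜 := ℂ)]
      simp [← adjoint_inner_left]
    · simp [← Complex.ofReal_pow]
  have hmem : ∀ x : H, Memℓp (E := fun _ : Fin n → ℕ => H)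
      (fun k => B (adjoint (finPow T k) x)) 2 := by
    intro x
    rw [memℓp_gen_iff (by norm_num)]
    simpa using (hsum x).summable
  let J : H →ₗᵢ[ℂ] lp (fun _ : Fin n → ℕ => H) 2 :=
    { toFun := fun x => ⟨fun k => B (adjoint (finPow T k) x), hmem x⟩
      map_add' := fun x y => by
        ext k
        change B (adjoint (finPow T k) (x + y)) =
          B (adjoint (finPow T k) x) + B (adjoint (finPow T k) y)
        simp
      map_smul' := fun c x => by
        ext k
        simp
      norm_map' := fun x => by
        have h2 : 0 < (2 : ENNReal).toReal := by norm_num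
        rw [← Real.rpow_left_inj (norm_nonneg _) (norm_nonneg _) h2.ne', lp.norm_rpow_eq_tsum h2]
        simpa using (hsum x).tsum_eq }
  refine ⟨J.toContinuousLinearMap, J.adjoint_comp_self, fun i => ?_⟩
  ext x k
  have : adjoint (finPow T (k + Pi.single i 1)) = adjoint (finPow T k) * adjoint (T i) := by
    rw [finPow_add_single T hT.comm]
    exact star_mul _ _
  simp only [comp_apply, adjoint_shift_apply]
  change B (adjoint (finPow T (k + Pi.single i 1)) x) = B (adjoint (finPow T k) (adjoint (T i) x))
  rw [this]
  rfl

end Dilation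

/-- For a Beurling tuple `T`, `j`, and `P ⊆ {1,…,n} \ {j}`, for every
`h ∈ H` the family `(T_P^α D²_{j,T,P} T_P^{*α} h)_{α ∈ ℤ₊^P}` is summable with sum
`(I − Tⱼ*Tⱼ) h`. -/
theorem beurling_defectSq_series {n : ℕ} (hn : 0 < n) (T : Fin n → H →L[ℂ] H)
    (hT : IsBeurlingTuple T) (j : Fin n) (P : Finset (Fin n)) (hP : j ∉ P) (h : H) :
    HasSum
      (fun α : ↥P → ℕ =>
        finPow T (extendSupport P α)
          (truncDefectSq T j P (adjoint (finPow T (extendSupport P α)) h)))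
      ((1 - adjoint (T j) * T j) h) := by
  obtain ⟨hS, hB⟩ := hT
  obtain ⟨J, hJ, hVJ⟩ := hS.exists_lifting
  have hpos := truncDefectSq_isPositive_of_lifting T hB (shift H) J adjoint_shift_mul_shift_self
    shift_comm adjoint_shift_mul_shift hJ hVJ j P hP
  obtain ⟨A, _, φ, d, hd⟩ := exists_commRing_lift (fun i => conjEnd (T i)) fun i j => by
    simp only [← conjEnd_mul, hS.comm i j]
  rw [truncDefectSq_eq φ d T hd] at hpos
  have key := hasSum_of_isPositive_prod φ (fun p : ↥P => d p) (fun p => T p) (fun p => hd p)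
    (fun p => hS.contraction p) (fun p => hS.pure p) _ hpos h
  refine key.congr_fun fun α => ?_
  rw [← prod_pow_extendSupport, ← finPow_conj φ d T hd, ← truncDefectSq_eq φ d T hd]
  rfl
end
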